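/- arXiv:1509.02766 — 2 statements merged into one kernel-verified Lean document; each statement's English description precedes it below -/
import Mathlib

section
/- Let a₋ > 0, a₊ > 0 and set δ = 2(a₊ − a₋)/(a₊ + a₋). Let δ₃ be a real number and suppose ε₁, ε₃ are real numbers satisfying ε₃ − ε₁ = δ₃ and a₋·h(ε₁) + a₊·h(ε₃) = a₋·h(δ₃). Then |ε₃ − δ₃| = |ε₁| ≤ (1/2)|δ₃ δ|. Moreover, ε₃ has the same sign as δ₃ (in particular ε₃ = 0 iff δ₃ = 0), and ε₁ has the same sign as the product −δ·δ₃. -/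
/-- The function `h` from the paper: `h(ε) = ε` if `ε ≥ 0`, `h(ε) = sinh ε` if `ε < 0`. -/
noncomputable def hfun (ε : ℝ) : ℝ := if 0 ≤ ε then ε else Real.sinh ε

lemma cosh_conv (a b x y : ℝ) (ha : 0 ≤ a) (hb : 0 ≤ b) (hab : a + b = 1) :
    Real.cosh (a * x + b * y) ≤ a * Real.cosh x + b * Real.cosh y := by
  have e1 := convexOn_exp.2 (Set.mem_univ x) (Set.mem_univ y) ha hb hab
  have e2 := convexOn_exp.2 (Set.mem_univ (-x)) (Set.mem_univ (-y)) ha hb hab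
  simp only [smul_eq_mul] at e1 e2
  have : a * -x + b * -y = -(a * x + b * y) := by ring
  rw [this] at e2
  simp only [Real.cosh_eq]
  linarith

lemma lemA (s D : ℝ) (hs : 0 ≤ s) (hs1 : s ≤ 1) (hD : 0 ≤ D) :
    (2 - s) * Real.sinh (s * D) ≤ s * (Real.sinh D + (1 - s) * D) := by
  have hd : ∀ x : ℝ, HasDerivAt
      (fun x => s * (Real.sinh x + (1 - s) * x) - (2 - s) * Real.sinh (s * x))
      (s * (Real.cosh x + (1 - s) * 1) - (2 - s) * (Real.cosh (s * x) * (s * 1))) x := fun x =>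
    (((Real.hasDerivAt_sinh x).add ((hasDerivAt_id x).const_mul (1 - s))).const_mul s).sub
      ((((hasDerivAt_id x).const_mul s).sinh).const_mul (2 - s))
  have hm := monotone_of_deriv_nonneg (fun x => (hd x).differentiableAt) (fun x => by
    rw [(hd x).deriv]
    have h := cosh_conv s (1 - s) x 0 hs (by linarith) (by ring)
    simp only [mul_zero, add_zero, Real.cosh_zero, mul_one] at h
    have h3 : (2 - s) * Real.cosh (s * x) ≤ (2 - s) * (s * Real.cosh x + (1 - s)) :=
      mul_le_mul_of_nonneg_left h (by linarith)
    have h4 : 0 ≤ (1 - s) ^ 2 * (Real.cosh x - 1) :=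
      mul_nonneg (sq_nonneg _) (by linarith [Real.one_le_cosh x])
    have h5 : 0 ≤ s * ((Real.cosh x + (1 - s)) - (2 - s) * Real.cosh (s * x)) :=
      mul_nonneg hs (by nlinarith)
    linarith)
  have := hm hD
  simp at this
  linarith

lemma lemB (u D : ℝ) (hs : 0 ≤ u) (hs1 : u ≤ 1) (hD : 0 ≤ D) :
    (1 + u) * Real.sinh D ≤
      (1 + u) * Real.sinh (u * D) + (1 - u) * Real.sinh ((1 + u) * D) := by
  have hd : ∀ x : ℝ, HasDerivAt
      (fun x => (1 + u) * Real.sinh (u * x) + (1 - u) * Real.sinh ((1 + u) * x)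
        - (1 + u) * Real.sinh x)
      ((1 + u) * (Real.cosh (u * x) * (u * 1))
        + (1 - u) * (Real.cosh ((1 + u) * x) * ((1 + u) * 1)) - (1 + u) * Real.cosh x) x :=
    fun x => (((((hasDerivAt_id x).const_mul u).sinh).const_mul (1 + u)).add
      ((((hasDerivAt_id x).const_mul (1 + u)).sinh).const_mul (1 - u))).sub
      ((Real.hasDerivAt_sinh x).const_mul (1 + u))
  have hm := monotone_of_deriv_nonneg (fun x => (hd x).differentiableAt) (fun x => by
    rw [(hd x).deriv]
    have h := cosh_conv u (1 - u) (u * x) ((1 + u) * x) hs (by linarith) (by ring)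
    have e : u * (u * x) + (1 - u) * ((1 + u) * x) = x := by ring
    rw [e] at h
    have h5 := mul_le_mul_of_nonneg_left h (show 0 ≤ 1 + u by linarith)
    linarith)
  have := hm hD
  simp at this
  linarith

lemma hfun_pos {x : ℝ} (hx : 0 ≤ x) : hfun x = x := by simp [hfun, hx]

lemma hfun_neg {x : ℝ} (hx : x ≤ 0) : hfun x = Real.sinh x := by
  rcases hx.lt_or_eq with h | h
  · simp [hfun, not_le.2 h]
  · simp [hfun, h]

lemma hfun_mono : StrictMono hfun := by
  intro x y hxy
  rcases le_total 0 x with hx | hx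
  · rw [hfun_pos hx, hfun_pos (hx.trans hxy.le)]; exact hxy
  · rcases le_total 0 y with hy | hy
    · rw [hfun_neg hx, hfun_pos hy]
      rcases hx.lt_or_eq with h | h
      · exact (Real.sinh_neg_iff.2 h).trans_le hy
      · subst h; simpa using hxy
    · rw [hfun_neg hx, hfun_neg hy]; exact Real.sinh_lt_sinh.2 hxy

lemma F_mono {am ap d x y : ℝ} (ham : 0 < am) (hap : 0 < ap)
    (h : am * hfun x + ap * hfun (x + d) < am * hfun y + ap * hfun (y + d)) : x < y := by
  by_contra hc
  push Not at hc
  have h1 := mul_le_mul_of_nonneg_left (hfun_mono.monotone hc) ham.le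
  have h2 := mul_le_mul_of_nonneg_left
    (hfun_mono.monotone (show y + d ≤ x + d by linarith)) hap.le
  linarith

lemma F_mono_le {am ap d x y : ℝ} (ham : 0 < am) (hap : 0 < ap)
    (h : am * hfun x + ap * hfun (x + d) ≤ am * hfun y + ap * hfun (y + d)) : x ≤ y := by
  by_contra hc
  push Not at hc
  have h1 := mul_lt_mul_of_pos_left (hfun_mono hc) ham
  have h2 := mul_lt_mul_of_pos_left
    (hfun_mono (show y + d < x + d by linarith)) hap
  linarith

/-- Interaction estimate for a 3-wave hitting a composite wave (Accurate solver). -/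
theorem stmt2 (am ap δ δ₃ ε₁ ε₃ : ℝ) (ham : 0 < am) (hap : 0 < ap)
    (hδ : δ = 2 * (ap - am) / (ap + am))
    (h1 : ε₃ - ε₁ = δ₃)
    (h2 : am * hfun ε₁ + ap * hfun ε₃ = am * hfun δ₃) :
    |ε₃ - δ₃| = |ε₁| ∧ |ε₁| ≤ (1/2) * |δ₃ * δ| ∧
    Real.sign ε₃ = Real.sign δ₃ ∧ Real.sign ε₁ = Real.sign (-(δ * δ₃)) := by
  have hy : ε₃ = ε₁ + δ₃ := by linarith
  subst hy
  clear h1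
  refine ⟨by congr 1; ring, ?_⟩
  have h00 : hfun 0 = 0 := hfun_pos le_rfl
  have hS : 0 < ap + am := by linarith
  obtain ⟨t, ht⟩ : ∃ t, t = (ap - am) / (ap + am) := ⟨_, rfl⟩
  have hδt : δ = 2 * t := by rw [hδ, ht]; ring
  have htS : t * (ap + am) = ap - am := by rw [ht]; field_simp
  clear hδ ht
  subst hδt
  obtain ⟨m, hm⟩ : ∃ m, m = (ap + am) / 2 := ⟨_, rfl⟩
  have hm0 : 0 < m := by linarith
  have eap : ap = m * (1 + t) := by rw [hm]; linarith
  have eam : am = m * (1 - t) := by rw [hm]; linarith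
  have t1 : t < 1 := by
    by_contra hc
    nlinarith
  have t2 : -1 < t := by
    by_contra hc
    nlinarith
  have e0 : (1/2) * |δ₃ * (2 * t)| = |δ₃| * |t| := by
    rw [abs_mul, abs_mul, abs_two]; ring
  rw [e0]
  clear e0
  have h3 : (1 - t) * hfun ε₁ + (1 + t) * hfun (ε₁ + δ₃) = (1 - t) * hfun δ₃ := by
    rw [eap, eam] at h2
    apply mul_left_cancel₀ hm0.ne'
    linarith
  clear h2 eap eam hm htS hm0 hS ham hap
  have p1 : 0 < 1 - t := by linarith
  have p2 : 0 < 1 + t := by linarith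
  have up : ∀ z, (1 - t) * hfun δ₃ < (1 - t) * hfun z + (1 + t) * hfun (z + δ₃) → ε₁ < z :=
    fun z hz => F_mono p1 p2 (h3.trans_lt hz)
  have lo : ∀ z, (1 - t) * hfun z + (1 + t) * hfun (z + δ₃) < (1 - t) * hfun δ₃ → z < ε₁ :=
    fun z hz => F_mono p1 p2 (hz.trans_eq h3.symm)
  have upl : ∀ z, (1 - t) * hfun δ₃ ≤ (1 - t) * hfun z + (1 + t) * hfun (z + δ₃) → ε₁ ≤ z :=
    fun z hz => F_mono_le p1 p2 (h3.trans_le hz)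
  have lol : ∀ z, (1 - t) * hfun z + (1 + t) * hfun (z + δ₃) ≤ (1 - t) * hfun δ₃ → z ≤ ε₁ :=
    fun z hz => F_mono_le p1 p2 (hz.trans_eq h3.symm)
  rcases lt_trichotomy δ₃ 0 with hd | hd | hd
  · have hn : hfun δ₃ < 0 := h00 ▸ hfun_mono hd
    have hy : ε₁ < -δ₃ := up _ (by
      rw [neg_add_cancel, h00, hfun_pos (by linarith : 0 ≤ -δ₃)]; nlinarith)
    have hy' : ε₁ + δ₃ < 0 := by linarith
    rw [Real.sign_of_neg hy', Real.sign_of_neg hd, abs_of_neg hd]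
    rcases lt_trichotomy t 0 with h | h | h
    · have hx : ε₁ < 0 := up 0 (by rw [h00, zero_add]; nlinarith)
      rw [Real.sign_of_neg hx, Real.sign_of_neg (by nlinarith), abs_of_neg hx, abs_of_neg h]
      refine ⟨?_, rfl, rfl⟩
      have := lol (-t * δ₃) (by
        rw [hfun_neg (by nlinarith), hfun_neg (by nlinarith), hfun_neg hd.le]
        have := lemB (-t) (-δ₃) (by linarith) (by linarith) (by linarith)
        rw [show (-t) * (-δ₃) = -(-t * δ₃) by ring,
          show (1 + -t) * (-δ₃) = -(-t * δ₃ + δ₃) by ring] at this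
        simp only [Real.sinh_neg] at this
        linarith)
      linarith
    · subst h
      have a := upl 0 (by simp [h00])
      have b := lol 0 (by simp [h00])
      have : ε₁ = 0 := le_antisymm a b
      simp [this]
    · have hx : 0 < ε₁ := lo 0 (by rw [h00, zero_add]; nlinarith)
      rw [Real.sign_of_pos hx, Real.sign_of_pos (by nlinarith), abs_of_pos hx, abs_of_pos h]
      refine ⟨?_, rfl, rfl⟩
      apply upl
      rw [hfun_pos (by nlinarith : 0 ≤ -δ₃ * t), hfun_neg (by nlinarith : -δ₃ * t + δ₃ ≤ 0),
        hfun_neg hd.le]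
      have := lemA (1 - t) (-δ₃) (by linarith) (by linarith) (by linarith)
      rw [show (1 - t) * (-δ₃) = -(-δ₃ * t + δ₃) by ring] at this
      simp only [Real.sinh_neg] at this
      linarith
  · subst hd
    have a := upl 0 (by simp [h00])
    have b := lol 0 (by simp [h00])
    have : ε₁ = 0 := le_antisymm a b
    simp [this]
  · have hn : hfun δ₃ = δ₃ := hfun_pos hd.le
    have hy : -δ₃ < ε₁ := lo _ (by
      rw [neg_add_cancel, h00, hn]
      have : hfun (-δ₃) < 0 := h00 ▸ hfun_mono (by linarith : -δ₃ < 0)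
      nlinarith)
    have hy' : 0 < ε₁ + δ₃ := by linarith
    rw [Real.sign_of_pos hy', Real.sign_of_pos hd, abs_of_pos hd]
    rw [hfun_pos hy'.le, hn] at h3
    rcases lt_trichotomy t 0 with h | h | h
    · have hx : 0 < ε₁ := lo 0 (by rw [h00, zero_add, hn]; nlinarith)
      rw [Real.sign_of_pos hx, Real.sign_of_pos (by nlinarith), abs_of_pos hx, abs_of_neg h]
      refine ⟨?_, rfl, rfl⟩
      rw [hfun_pos hx.le] at h3
      linarith
    · subst h
      have a := upl 0 (by simp [h00])
      have b := lol 0 (by simp [h00])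
      have : ε₁ = 0 := le_antisymm a b
      simp [this]
    · have hx : ε₁ < 0 := up 0 (by rw [h00, zero_add, hn]; nlinarith)
      rw [Real.sign_of_neg hx, Real.sign_of_neg (by nlinarith), abs_of_neg hx, abs_of_pos h]
      refine ⟨?_, rfl, rfl⟩
      rw [hfun_neg hx.le] at h3
      have : Real.sinh ε₁ ≤ ε₁ := Real.sinh_le_self_iff.2 hx.le
      nlinarith
end

section
/- For all real numbers x, y with x > 0, y > 0 and x + y < 1/2, one has H_b(x, y) < x + y, and consequently K(H_b(x, y)) > K(x + y). -/
/-- The stability function `H_b` of the bubble case. -/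
noncomputable def Hb (x y : ℝ) : ℝ :=
  (4 / (4 - x * y)) * max (x * (2 + y) / (2 - y)) (y * (2 + x) / (2 - x))

/-- The threshold function `K(r) = (2/(1+r))·log(1 + (2/r)(1 + √(1+r)))`. -/
noncomputable def Kfun (r : ℝ) : ℝ :=
  (2 / (1 + r)) * Real.log (1 + (2 / r) * (1 + Real.sqrt (1 + r)))

theorem Kfun_anti (a b : ℝ) (ha : 0 < a) (hab : a < b) : Kfun b < Kfun a := by
  have hb : 0 < b := ha.trans hab
  have key : ∀ r : ℝ, 0 < r → 1 < Real.sqrt (1 + r) ∧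
      (2 / r) * (1 + Real.sqrt (1 + r)) = 2 / (Real.sqrt (1 + r) - 1) := by
    intro r hr
    have h1 : 1 < Real.sqrt (1 + r) := by
      rw [Real.lt_sqrt (by norm_num)]; linarith
    have h2 := Real.sq_sqrt (show (0:ℝ) ≤ 1 + r by linarith)
    refine ⟨h1, ?_⟩
    have h3 : Real.sqrt (1 + r) - 1 ≠ 0 := by linarith
    rw [eq_div_iff h3, div_mul_eq_mul_div, div_mul_eq_mul_div, div_eq_iff hr.ne']
    linear_combination 2 * h2
  obtain ⟨a1, a2⟩ := key a ha
  obtain ⟨b1, b2⟩ := key b hb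
  have hs : Real.sqrt (1 + a) < Real.sqrt (1 + b) :=
    Real.sqrt_lt_sqrt (by linarith) (by linarith)
  unfold Kfun
  rw [a2, b2]
  have hpos : 0 < 2 / (Real.sqrt (1 + b) - 1) := div_pos two_pos (by linarith)
  have hlt : 2 / (Real.sqrt (1 + b) - 1) < 2 / (Real.sqrt (1 + a) - 1) :=
    div_lt_div_of_pos_left two_pos (by linarith) (by linarith)
  have hlog : 0 < Real.log (1 + 2 / (Real.sqrt (1 + b) - 1)) := Real.log_pos (by linarith)
  have hlog2 := Real.log_lt_log (by linarith : 0 < 1 + 2 / (Real.sqrt (1 + b) - 1))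
    (by linarith : 1 + 2 / (Real.sqrt (1 + b) - 1) < 1 + 2 / (Real.sqrt (1 + a) - 1))
  have hc : 2 / (1 + b) < 2 / (1 + a) :=
    div_lt_div_of_pos_left two_pos (by linarith) (by linarith)
  exact mul_lt_mul hc hlog2.le hlog (by positivity)

theorem Hb_aux (x y : ℝ) (hx : 0 < x) (hy : 0 < y) (hxy : x + y < 1 / 2) :
    (4 / (4 - x * y)) * (x * (2 + y) / (2 - y)) < x + y := by
  have h1 : 0 < 4 - x * y := by nlinarith
  have h2 : 0 < 2 - y := by linarith
  rw [div_mul_div_comm, div_lt_iff₀ (mul_pos h1 h2)]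
  have h3 : 0 < 8 - 8 * x - 4 * y - 2 * x * (x + y) + x ^ 2 * y + x * y ^ 2 := by
    have e1 : 0 < x ^ 2 * y := by positivity
    have e2 : 0 < x * y ^ 2 := by positivity
    nlinarith
  nlinarith [mul_pos hy h3]

/-- For `x, y > 0` with `x + y < 1/2`, one has `H_b(x,y) < x + y`, hence
`K(H_b(x,y)) > K(x + y)`: the bubble-case threshold improves the Amadori–Corli one. -/
theorem stmt15 (x y : ℝ) (hx : 0 < x) (hy : 0 < y) (hxy : x + y < 1 / 2) :
    Hb x y < x + y ∧ Kfun (Hb x y) > Kfun (x + y) := by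
  have h1 : 0 < 4 - x * y := by nlinarith
  have h2 : 0 < 2 - y := by linarith
  have hH : Hb x y < x + y := by
    unfold Hb
    rcases max_choice (x * (2 + y) / (2 - y)) (y * (2 + x) / (2 - x)) with h | h
    · rw [h]; exact Hb_aux x y hx hy hxy
    · rw [h]
      have := Hb_aux y x hy hx (by linarith)
      rwa [mul_comm y x, add_comm y x] at this
  have hp : 0 < Hb x y := by
    unfold Hb
    exact mul_pos (by positivity) (lt_max_of_lt_left (by positivity))
  exact ⟨hH, Kfun_anti _ _ hp hH⟩
end
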